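/- arXiv:1904.00190 — 2 statements merged into one kernel-verified Lean document; each statement's English description precedes it below -/
import Mathlib

section
/- For integers ℓ₁, ℓ₂ ≥ 1 and D(s₁,s₂) = ∫_{0≤t₁≤t₂≤∞} θ⁰(t₁)t₁^{s₁−1}θ⁰(t₂)t₂^{s₂−1}dt₁dt₂ with θ⁰(t) = 2∑_{n≥1}e^{−πn²t²}, one has D(2ℓ₁, 2ℓ₂) = ((ℓ₁−1)!(ℓ₂−1)!/π^{ℓ₁+ℓ₂}) · ∑_{k=0}^{ℓ₂−1} C(ℓ₁+k−1, k) · Q(ℓ₁+k, ℓ₂−k), where Q(k₁,k₂) = ∑_{m,n≥1} 1/((m²+n²)^{k₁}·n^{2k₂}). -/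
open Complex Real MeasureTheory Finset

/-- Jacobi theta function minus its constant term: `θ⁰(t) = 2∑_{n ≥ 1} e^{-π n² t²}`. -/
noncomputable def theta0 (t : ℝ) : ℝ := 2 * ∑' n : ℕ, Real.exp (-(π * ((n : ℝ) + 1) ^ 2 * t ^ 2))

/-- `D(s₁,s₂) = ∫_{0 ≤ t₁ ≤ t₂ ≤ ∞} θ⁰(t₁)t₁^{s₁-1} θ⁰(t₂)t₂^{s₂-1}`. -/
noncomputable def Dfun (s₁ s₂ : ℂ) : ℂ :=
  ∫ t₂ in Set.Ioi (0 : ℝ),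
    (∫ t₁ in Set.Ioc (0 : ℝ) t₂, (theta0 t₁ : ℂ) * (t₁ : ℂ) ^ (s₁ - 1)) *
      ((theta0 t₂ : ℂ) * (t₂ : ℂ) ^ (s₂ - 1))

/-- Multiple quadratic sum `Q(k₁,k₂) = ∑_{m,n ≥ 1} (m²+n²)^{-k₁} n^{-2k₂}`. -/
noncomputable def Qsum (k₁ k₂ : ℕ) : ℝ :=
  ∑' p : ℕ × ℕ,
    1 / ((((p.1 + 1 : ℝ) ^ 2 + (p.2 + 1 : ℝ) ^ 2) ^ k₁) * ((p.2 + 1 : ℝ) ^ (2 * k₂)))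

/-- Gaussian monomial `2 t^{2L+1} e^{-a t²}`. -/
noncomputable def gmon (a : ℝ) (L : ℕ) (t : ℝ) : ℝ := 2 * t ^ (2 * L + 1) * Real.exp (-(a * t ^ 2))

/-- Explicit upper incomplete gamma function, `∫_t^∞ gmon a L`. -/
noncomputable def gup (a : ℝ) (L : ℕ) (t : ℝ) : ℝ :=
  ∑ j ∈ Finset.range (L + 1),
    ((L.factorial : ℝ) / (j.factorial * a ^ (L + 1 - j))) * (t ^ (2 * j) * Real.exp (-(a * t ^ 2)))

lemma gup_succ (a : ℝ) (L : ℕ) (t : ℝ) :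
    gup a (L + 1) t = ((L : ℝ) + 1) / a * gup a L t
      + 1 / a * (t ^ (2 * (L + 1)) * Real.exp (-(a * t ^ 2))) := by
  unfold gup
  rw [Finset.sum_range_succ _ (L + 1), Finset.mul_sum]
  congr 1
  · apply Finset.sum_congr rfl
    intro j hj
    have hj' : j ≤ L := by simpa [Nat.lt_succ_iff] using hj
    have e : L + 1 + 1 - j = (L + 1 - j) + 1 := by omega
    rw [e, Nat.factorial_succ, pow_succ, ← mul_assoc (((L : ℝ) + 1) / a)]
    congr 1
    push_cast
    rw [div_mul_div_comm]
    congr 1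
    ring
  · have : (((L + 1).factorial : ℕ) : ℝ) ≠ 0 := by positivity
    have e : L + 1 + 1 - (L + 1) = 1 := by omega
    rw [e, pow_one]
    congr 1
    field_simp

lemma gup_hasDerivAt {a : ℝ} (ha : 0 < a) (L : ℕ) (t : ℝ) :
    HasDerivAt (gup a L) (-gmon a L t) t := by
  have hexp : HasDerivAt (fun t : ℝ => Real.exp (-(a * t ^ 2)))
      (Real.exp (-(a * t ^ 2)) * (-(a * (2 * t)))) t := by
    have h := (((hasDerivAt_pow 2 t).const_mul a).neg).exp
    simpa using h
  induction L with
  | zero =>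
    have : gup a 0 = fun t => 1 / a * Real.exp (-(a * t ^ 2)) := by
      funext t; simp [gup]
    rw [this]
    refine (hexp.const_mul (1 / a)).congr_deriv ?_
    unfold gmon
    field_simp
    simp
  | succ L ih =>
    have : gup a (L + 1) = fun t => ((L : ℝ) + 1) / a * gup a L t
      + 1 / a * (t ^ (2 * (L + 1)) * Real.exp (-(a * t ^ 2))) := by
      funext t; exact gup_succ a L t
    rw [this]
    have h := (ih.const_mul (((L : ℝ) + 1) / a)).add
      (((hasDerivAt_pow (2 * (L + 1)) t).mul hexp).const_mul (1 / a))
    refine h.congr_deriv ?_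
    unfold gmon
    have e : 2 * (L + 1) - 1 = 2 * L + 1 := by omega
    rw [e]
    push_cast
    field_simp
    ring

lemma gup_continuous {a : ℝ} (ha : 0 < a) (L : ℕ) : Continuous (gup a L) :=
  continuous_iff_continuousAt.2 fun t => (gup_hasDerivAt ha L t).continuousAt

lemma gmon_continuous (a : ℝ) (L : ℕ) : Continuous (gmon a L) := by
  unfold gmon; fun_prop

lemma gmon_nonneg (a : ℝ) (L : ℕ) {t : ℝ} (ht : 0 ≤ t) : 0 ≤ gmon a L t := by
  unfold gmon; positivity

lemma gup_nonneg {a : ℝ} (ha : 0 < a) (L : ℕ) {t : ℝ} (ht : 0 ≤ t) : 0 ≤ gup a L t := by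
  unfold gup; positivity

lemma gup_zero (a : ℝ) (L : ℕ) : gup a L 0 = (L.factorial : ℝ) / a ^ (L + 1) := by
  unfold gup
  rw [Finset.sum_range_succ']
  simp

lemma tendsto_pow_gauss {a : ℝ} (ha : 0 < a) (j : ℕ) :
    Filter.Tendsto (fun t : ℝ => t ^ (2 * j) * Real.exp (-(a * t ^ 2))) Filter.atTop (nhds 0) := by
  have h1 : Filter.Tendsto (fun t : ℝ => a * t ^ 2) Filter.atTop Filter.atTop :=
    (Filter.tendsto_pow_atTop two_ne_zero).const_mul_atTop ha
  have h2 := ((Real.tendsto_pow_mul_exp_neg_atTop_nhds_zero j).comp h1).const_mul (1 / a ^ j)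
  rw [mul_zero] at h2
  refine h2.congr fun t => ?_
  simp only [Function.comp]
  rw [mul_pow, pow_mul]
  field_simp

lemma gup_tendsto {a : ℝ} (ha : 0 < a) (L : ℕ) :
    Filter.Tendsto (gup a L) Filter.atTop (nhds 0) := by
  have : Filter.Tendsto (gup a L) Filter.atTop
      (nhds (∑ j ∈ Finset.range (L + 1),
        ((L.factorial : ℝ) / (j.factorial * a ^ (L + 1 - j))) * 0)) :=
    tendsto_finsetSum _ fun j _ => (tendsto_pow_gauss ha j).const_mul _
  simpa using this

lemma gmon_integrable {a : ℝ} (ha : 0 < a) (L : ℕ) :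
    IntegrableOn (gmon a L) (Set.Ioi 0) := by
  have := integrableOn_Ioi_deriv_of_nonpos' (a := 0) (fun x _ => gup_hasDerivAt ha L x)
    (fun x hx => neg_nonpos.2 (gmon_nonneg a L (le_of_lt hx))) (gup_tendsto ha L)
  simpa using this.neg

lemma gmon_integral {a : ℝ} (ha : 0 < a) (L : ℕ) :
    ∫ t in Set.Ioi (0 : ℝ), gmon a L t = (L.factorial : ℝ) / a ^ (L + 1) := by
  have := integral_Ioi_of_hasDerivAt_of_nonpos' (a := 0) (fun x _ => gup_hasDerivAt ha L x)
    (fun x hx => neg_nonpos.2 (gmon_nonneg a L (le_of_lt hx))) (gup_tendsto ha L)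
  rw [integral_neg, gup_zero] at this
  linarith

lemma gmon_integral_Ioc {a : ℝ} (ha : 0 < a) (L : ℕ) {t : ℝ} (ht : 0 ≤ t) :
    ∫ s in Set.Ioc (0 : ℝ) t, gmon a L s = gup a L 0 - gup a L t := by
  rw [← intervalIntegral.integral_of_le ht]
  have := intervalIntegral.integral_eq_sub_of_hasDerivAt (a := 0) (b := t)
    (fun x _ => gup_hasDerivAt ha L x) ((gmon_continuous a L).neg.intervalIntegrable _ _)
  rw [intervalIntegral.integral_neg] at this
  linarith

lemma gup_le {a : ℝ} (ha : 0 < a) (L : ℕ) {t : ℝ} (ht : 0 ≤ t) : gup a L t ≤ gup a L 0 := by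
  have h := gmon_integral_Ioc ha L ht
  have : 0 ≤ ∫ s in Set.Ioc (0 : ℝ) t, gmon a L s :=
    setIntegral_nonneg measurableSet_Ioc fun s hs => gmon_nonneg a L hs.1.le
  linarith

lemma low_mul_integrable {a b : ℝ} (ha : 0 < a) (hb : 0 < b) (L M : ℕ) :
    IntegrableOn (fun t => (gup a L 0 - gup a L t) * gmon b M t) (Set.Ioi 0) := by
  refine Integrable.bdd_mul (c := gup a L 0) (gmon_integrable hb M)
    (continuous_const.sub (gup_continuous ha L)).aestronglyMeasurable ?_
  refine (ae_restrict_iff' measurableSet_Ioi).2 (Filter.Eventually.of_forall fun t ht => ?_)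
  have ht' : (0 : ℝ) ≤ t := le_of_lt ht
  rw [Real.norm_eq_abs, abs_of_nonneg (sub_nonneg.2 (gup_le ha L ht'))]
  linarith [gup_nonneg ha L ht']

lemma mul_up_integrable {a b : ℝ} (ha : 0 < a) (hb : 0 < b) (L M : ℕ) :
    IntegrableOn (fun t => gmon a L t * gup b M t) (Set.Ioi 0) := by
  refine Integrable.mul_bdd (c := gup b M 0) (gmon_integrable ha L)
    (gup_continuous hb M).aestronglyMeasurable ?_
  refine (ae_restrict_iff' measurableSet_Ioi).2 (Filter.Eventually.of_forall fun t ht => ?_)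
  have ht' : (0 : ℝ) ≤ t := le_of_lt ht
  rw [Real.norm_eq_abs, abs_of_nonneg (gup_nonneg hb M ht')]
  exact gup_le hb M ht'

lemma parts {a b : ℝ} (ha : 0 < a) (hb : 0 < b) (L M : ℕ) :
    ∫ t in Set.Ioi (0 : ℝ), (gup a L 0 - gup a L t) * gmon b M t
      = ∫ t in Set.Ioi (0 : ℝ), gmon a L t * gup b M t := by
  have hu : ∀ x ∈ Set.Ioi (0 : ℝ), HasDerivAt (fun t => gup a L 0 - gup a L t) (gmon a L x) x := by
    intro x _
    simpa using (gup_hasDerivAt ha L x).const_sub (gup a L 0)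
  have hv : ∀ x ∈ Set.Ioi (0 : ℝ), HasDerivAt (gup b M) ((fun t => -gmon b M t) x) x :=
    fun x _ => gup_hasDerivAt hb M x
  have hc : Continuous ((fun t => gup a L 0 - gup a L t) * gup b M) :=
    (continuous_const.sub (gup_continuous ha L)).mul (gup_continuous hb M)
  have h := integral_Ioi_mul_deriv_eq_deriv_mul (a := 0) (a' := 0) (b' := 0) hu hv
    (by
      have := (low_mul_integrable ha hb L M).neg
      refine this.congr (Filter.Eventually.of_forall fun t => ?_)
      simp)
    (mul_up_integrable ha hb L M)
    (by
      have := (hc.tendsto 0).mono_left (nhdsWithin_le_nhds (s := Set.Ioi 0))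
      simpa using this)
    (by
      have := (tendsto_const_nhds.sub (gup_tendsto ha L) :
        Filter.Tendsto (fun t => gup a L 0 - gup a L t) Filter.atTop _).mul (gup_tendsto hb M)
      rw [mul_zero] at this
      exact this)
  simp only [mul_neg, integral_neg] at h
  linarith

/-- closed form of the double integral -/
noncomputable def cval (a b : ℝ) (L M : ℕ) : ℝ :=
  ∑ j ∈ Finset.range (M + 1),
    ((M.factorial : ℝ) / (j.factorial * b ^ (M + 1 - j))) *
      (((L + j).factorial : ℝ) / (a + b) ^ (L + j + 1))

lemma mul_up_integral {a b : ℝ} (ha : 0 < a) (hb : 0 < b) (L M : ℕ) :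
    ∫ t in Set.Ioi (0 : ℝ), gmon a L t * gup b M t = cval a b L M := by
  have : ∀ t, gmon a L t * gup b M t = ∑ j ∈ Finset.range (M + 1),
    ((M.factorial : ℝ) / (j.factorial * b ^ (M + 1 - j))) * gmon (a + b) (L + j) t := by
    intro t
    unfold gup
    rw [Finset.mul_sum]
    refine Finset.sum_congr rfl fun j _ => ?_
    unfold gmon
    have e : Real.exp (-((a + b) * t ^ 2)) = Real.exp (-(a * t ^ 2)) * Real.exp (-(b * t ^ 2)) := by
      rw [← Real.exp_add]; congr 1; ring
    rw [e]
    ring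
  simp_rw [this]
  rw [integral_finsetSum _ fun j _ => (gmon_integrable (add_pos ha hb) (L + j)).const_mul _]
  unfold cval
  refine Finset.sum_congr rfl fun j _ => ?_
  rw [integral_const_mul, gmon_integral (add_pos ha hb)]

/-- `π (n+1)²` -/
noncomputable def pn (n : ℕ) : ℝ := π * ((n : ℝ) + 1) ^ 2

lemma pn_pos (n : ℕ) : 0 < pn n := by unfold pn; positivity

lemma summable_gauss {t : ℝ} (ht : 0 < t) : Summable fun n : ℕ => Real.exp (-(pn n * t ^ 2)) := by
  have hr : Real.exp (-(π * t ^ 2)) < 1 := by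
    rw [Real.exp_lt_one_iff]; have : 0 < π * t ^ 2 := by positivity
    linarith
  refine (summable_geometric_of_lt_one (Real.exp_pos _).le hr).of_nonneg_of_le
    (fun n => (Real.exp_pos _).le) fun n => ?_
  rw [← Real.exp_nat_mul]
  apply Real.exp_le_exp.2
  have h : (n : ℝ) ≤ ((n : ℝ) + 1) ^ 2 := by nlinarith [(Nat.cast_nonneg n : (0 : ℝ) ≤ n)]
  have h2 : 0 ≤ π * t ^ 2 := by positivity
  unfold pn
  nlinarith [mul_le_mul_of_nonneg_right h h2]

lemma hasSum_theta {t : ℝ} (ht : 0 < t) (L : ℕ) :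
    HasSum (fun n => gmon (pn n) L t) (theta0 t * t ^ (2 * L + 1)) := by
  have h := (summable_gauss ht).hasSum.mul_left (2 * t ^ (2 * L + 1))
  have e : theta0 t * t ^ (2 * L + 1)
      = 2 * t ^ (2 * L + 1) * ∑' n : ℕ, Real.exp (-(pn n * t ^ 2)) := by
    unfold theta0 pn; ring
  rw [e]; exact h

lemma summable_inv_sq : Summable fun n : ℕ => 1 / ((n : ℝ) + 1) ^ 2 := by
  have := (summable_nat_add_iff 1).2 (Real.summable_one_div_nat_pow.2 one_lt_two)
  simpa using this

lemma summable_pn (L : ℕ) : Summable fun n : ℕ => (L.factorial : ℝ) / pn n ^ (L + 1) := by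
  refine (summable_inv_sq.mul_left (L.factorial : ℝ)).of_nonneg_of_le
    (fun n => by have := pn_pos n; positivity) fun n => ?_
  rw [mul_one_div]
  have h1 : (1 : ℝ) ≤ ((n : ℝ) + 1) ^ 2 := by nlinarith [(Nat.cast_nonneg n : (0 : ℝ) ≤ n)]
  have h2 : ((n : ℝ) + 1) ^ 2 ≤ pn n := by
    unfold pn; nlinarith [Real.pi_gt_three]
  have h3 : pn n ≤ pn n ^ (L + 1) := le_self_pow₀ (h1.trans h2) (by omega)
  gcongr
  exact h2.trans h3

lemma inner_hasSum {t : ℝ} (ht : 0 < t) (L : ℕ) :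
    HasSum (fun n => gup (pn n) L 0 - gup (pn n) L t)
      (∫ s in Set.Ioc (0 : ℝ) t, theta0 s * s ^ (2 * L + 1)) := by
  have hI : ∀ n, IntegrableOn (gmon (pn n) L) (Set.Ioc 0 t) := fun n =>
    (gmon_integrable (pn_pos n) L).mono_set Set.Ioc_subset_Ioi_self
  have hn : ∀ n, ∫ s in Set.Ioc 0 t, ‖gmon (pn n) L s‖ = gup (pn n) L 0 - gup (pn n) L t := by
    intro n
    rw [← gmon_integral_Ioc (pn_pos n) L ht.le]
    refine setIntegral_congr_fun measurableSet_Ioc fun s hs => ?_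
    exact Real.norm_of_nonneg (gmon_nonneg _ _ hs.1.le)
  have h := hasSum_integral_of_summable_integral_norm hI (by
    simp_rw [hn]
    refine (summable_pn L).of_nonneg_of_le
      (fun n => sub_nonneg.2 (gup_le (pn_pos n) L ht.le)) fun n => ?_
    rw [gup_zero]
    linarith [gup_nonneg (pn_pos n) L ht.le])
  have e : ∫ s in Set.Ioc (0 : ℝ) t, theta0 s * s ^ (2 * L + 1)
      = ∫ s in Set.Ioc (0 : ℝ) t, ∑' n, gmon (pn n) L s :=
    setIntegral_congr_fun measurableSet_Ioc fun s hs => (hasSum_theta hs.1 L).tsum_eq.symm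
  rw [e]
  refine h.congr_fun fun n => ?_
  exact (gmon_integral_Ioc (pn_pos n) L ht.le).symm

/-- the summand of `Qsum` -/
noncomputable def qterm (k₁ k₂ : ℕ) (p : ℕ × ℕ) : ℝ :=
  1 / ((((p.1 + 1 : ℝ) ^ 2 + (p.2 + 1 : ℝ) ^ 2) ^ k₁) * ((p.2 + 1 : ℝ) ^ (2 * k₂)))

lemma summable_qterm {k₁ k₂ : ℕ} (h₁ : k₁ ≠ 0) (h₂ : k₂ ≠ 0) : Summable (qterm k₁ k₂) := by
  have h := summable_inv_sq.mul_of_nonneg summable_inv_sq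
    (fun n => by positivity) (fun n => by positivity)
  refine h.of_nonneg_of_le (fun p => by unfold qterm; positivity) fun p => ?_
  unfold qterm
  rw [div_mul_div_comm, one_mul]
  have hx : (1 : ℝ) ≤ ((p.1 : ℝ) + 1) ^ 2 := by nlinarith [(Nat.cast_nonneg p.1 : (0 : ℝ) ≤ p.1)]
  have hy : (1 : ℝ) ≤ ((p.2 : ℝ) + 1) ^ 2 := by nlinarith [(Nat.cast_nonneg p.2 : (0 : ℝ) ≤ p.2)]
  have i1 : ((p.1 : ℝ) + 1) ^ 2 ≤ ((p.1 + 1 : ℝ) ^ 2 + (p.2 + 1 : ℝ) ^ 2) ^ k₁ :=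
    (by linarith : ((p.1 : ℝ) + 1) ^ 2 ≤ (p.1 + 1 : ℝ) ^ 2 + (p.2 + 1 : ℝ) ^ 2).trans
      (le_self_pow₀ (by linarith) h₁)
  have i2 : ((p.2 : ℝ) + 1) ^ 2 ≤ (p.2 + 1 : ℝ) ^ (2 * k₂) := by
    rw [pow_mul]; exact le_self_pow₀ hy h₂
  gcongr

lemma cval_eq (L M : ℕ) (p : ℕ × ℕ) :
    cval (pn p.1) (pn p.2) L M = ∑ k ∈ Finset.range (M + 1),
      ((L.factorial * M.factorial : ℝ) / π ^ (L + 1 + (M + 1))) *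
        ((Nat.choose (L + k) k : ℝ) * qterm (L + 1 + k) (M + 1 - k) p) := by
  unfold cval qterm pn
  refine Finset.sum_congr rfl fun k hk => ?_
  have hk' : k ≤ M := by simpa [Nat.lt_succ_iff] using hk
  have hf : (((L + k).factorial : ℕ) : ℝ) = (L + k).choose k * L.factorial * k.factorial := by
    exact_mod_cast (Nat.add_choose_mul_factorial_mul_factorial L k).symm
  obtain ⟨d, rfl⟩ := Nat.exists_eq_add_of_le hk'
  have e : k + d + 1 - k = d + 1 := by omega
  rw [hf, e, ← mul_add, mul_pow, mul_pow, ← pow_mul]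
  have h0 : (k.factorial : ℝ) ≠ 0 := by positivity
  have h1 : ((p.1 + 1 : ℝ) ^ 2 + (p.2 + 1 : ℝ) ^ 2) ≠ 0 := by positivity
  have h2 : (p.2 + 1 : ℝ) ≠ 0 := by positivity
  have h3 : π ≠ 0 := Real.pi_ne_zero
  field_simp
  ring

lemma cval_hasSum (L M : ℕ) :
    HasSum (fun p : ℕ × ℕ => cval (pn p.1) (pn p.2) L M)
      (((L.factorial * M.factorial : ℝ) / π ^ (L + 1 + (M + 1))) *
        ∑ k ∈ Finset.range (M + 1), (Nat.choose (L + k) k : ℝ) * Qsum (L + 1 + k) (M + 1 - k)) := by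
  simp_rw [cval_eq, Finset.mul_sum]
  refine hasSum_sum fun k hk => ?_
  have hk' : k < M + 1 := by simpa using hk
  exact ((summable_qterm (by omega) (by omega)).hasSum.mul_left _).mul_left _

lemma real_main (L M : ℕ) :
    ∫ t in Set.Ioi (0 : ℝ), (∫ s in Set.Ioc (0 : ℝ) t, theta0 s * s ^ (2 * L + 1)) *
        (theta0 t * t ^ (2 * M + 1))
      = ((L.factorial * M.factorial : ℝ) / π ^ (L + 1 + (M + 1))) *
        ∑ k ∈ Finset.range (M + 1), (Nat.choose (L + k) k : ℝ) * Qsum (L + 1 + k) (M + 1 - k) := by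
  have hval : ∀ p : ℕ × ℕ, ∫ t in Set.Ioi (0 : ℝ),
      (gup (pn p.1) L 0 - gup (pn p.1) L t) * gmon (pn p.2) M t = cval (pn p.1) (pn p.2) L M :=
    fun p => (parts (pn_pos _) (pn_pos _) L M).trans (mul_up_integral (pn_pos _) (pn_pos _) L M)
  have hnorm : ∀ p : ℕ × ℕ, ∫ t in Set.Ioi (0 : ℝ),
      ‖(gup (pn p.1) L 0 - gup (pn p.1) L t) * gmon (pn p.2) M t‖
        = cval (pn p.1) (pn p.2) L M := by
    intro p
    rw [← hval p]
    refine setIntegral_congr_fun measurableSet_Ioi fun t ht => ?_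
    have ht' : (0 : ℝ) ≤ t := le_of_lt ht
    exact Real.norm_of_nonneg
      (mul_nonneg (sub_nonneg.2 (gup_le (pn_pos _) L ht')) (gmon_nonneg _ _ ht'))
  have h := hasSum_integral_of_summable_integral_norm
    (fun p : ℕ × ℕ => low_mul_integrable (pn_pos p.1) (pn_pos p.2) L M)
    (by simp_rw [hnorm]; exact (cval_hasSum L M).summable)
  simp_rw [hval] at h
  rw [← h.unique (cval_hasSum L M)]
  refine setIntegral_congr_fun measurableSet_Ioi fun t ht => ?_
  have ht' : (0 : ℝ) < t := ht
  have hs := (inner_hasSum ht' L).mul (hasSum_theta ht' M)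
    ((inner_hasSum ht' L).summable.mul_of_nonneg (hasSum_theta ht' M).summable
      (fun n => sub_nonneg.2 (gup_le (pn_pos _) L ht'.le)) (fun n => gmon_nonneg _ _ ht'.le))
  exact hs.tsum_eq.symm

lemma cpow_even (t : ℝ) (L : ℕ) :
    (t : ℂ) ^ ((2 : ℂ) * ((L + 1 : ℕ) : ℂ) - 1) = ((t ^ (2 * L + 1) : ℝ) : ℂ) := by
  have e : (2 : ℂ) * ((L + 1 : ℕ) : ℂ) - 1 = ((2 * L + 1 : ℕ) : ℂ) := by push_cast; ring
  rw [e, Complex.cpow_natCast]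
  push_cast
  rfl

/-- `D(2ℓ₁,2ℓ₂) = ((ℓ₁-1)!(ℓ₂-1)!/π^{ℓ₁+ℓ₂}) ∑_{k=0}^{ℓ₂-1} C(ℓ₁+k-1,k) Q(ℓ₁+k,ℓ₂-k)`. -/
theorem D_totally_even_eq_quadratic_sums (ℓ₁ ℓ₂ : ℕ) (h₁ : 1 ≤ ℓ₁) (h₂ : 1 ≤ ℓ₂) :
    Dfun (2 * ℓ₁) (2 * ℓ₂) =
      (((Nat.factorial (ℓ₁ - 1) * Nat.factorial (ℓ₂ - 1) : ℝ) / π ^ (ℓ₁ + ℓ₂)) *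
          ∑ k ∈ Finset.range ℓ₂,
            (Nat.choose (ℓ₁ + k - 1) k : ℝ) * Qsum (ℓ₁ + k) (ℓ₂ - k) : ℝ) := by
  obtain ⟨L, rfl⟩ := Nat.exists_eq_add_of_le' h₁
  obtain ⟨M, rfl⟩ := Nat.exists_eq_add_of_le' h₂
  have e : ∀ k, L + 1 + k - 1 = L + k := fun k => by omega
  simp only [Nat.add_sub_cancel, e]
  rw [← real_main L M]
  unfold Dfun
  simp only [cpow_even, ← Complex.ofReal_mul]
  rw [← integral_complex_ofReal]
  refine integral_congr_ae (Filter.Eventually.of_forall fun t => ?_)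
  simp only
  rw [integral_complex_ofReal, ← Complex.ofReal_mul]
end

section
/- For every integer ℓ ≥ 1, ∑_{m,n≥1} 1/((m²+n²)^ℓ · n²) + ((1−ℓ)/2)·∑_{m≥1} 1/m^{2ℓ+2} = (π^{ℓ+1}/(ℓ−1)!)·ξ(2ℓ, 2), where ξ(s₁,s₂) denotes the double Riemann ξ-function. -/
open Complex Real MeasureTheory

/-- Full Jacobi theta function `θ = 1 + θ⁰`. -/
noncomputable def thetaFull (t : ℝ) : ℝ := 1 + theta0 t

/-- The double Riemann ξ-function, defined by the regularized iterated Mellin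
transform (valid for `Re s₁, Re s₂ > 1`). -/
noncomputable def doubleXi (s₁ s₂ : ℂ) : ℂ :=
  (∫ t₂ in Set.Ioi (0 : ℝ),
      (∫ t₁ in Set.Ioc (0 : ℝ) t₂, (thetaFull t₁ : ℂ) * (t₁ : ℂ) ^ (s₁ - 1)) *
        ((theta0 t₂ : ℂ) * (t₂ : ℂ) ^ (s₂ - 1))) -
    (∫ t₂ in Set.Ioi (0 : ℝ),
      (∫ t₁ in Set.Ioc (0 : ℝ) t₂, (t₁ : ℂ) ^ (s₂ - 1)) *
        ((theta0 t₂ : ℂ) * (t₂ : ℂ) ^ (s₁ - 1)))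

namespace DXi

/-- The coefficient `π (n+1)²`. -/
noncomputable def bb (n : ℕ) : ℝ := π * ((n : ℝ) + 1) ^ 2

/-- The Gaussian as an extended nonnegative real. -/
noncomputable def EE (b t : ℝ) : ENNReal := ENNReal.ofReal (Real.exp (-(b * t ^ 2)))

/-- `theta0` as an extended nonnegative real. -/
noncomputable def TT (t : ℝ) : ENNReal := 2 * ∑' n : ℕ, EE (bb n) t

lemma bb_pos (n : ℕ) : 0 < bb n := by unfold bb; positivity

lemma EE_meas (b : ℝ) : Measurable (EE b) := by unfold EE; fun_prop

lemma TT_meas : Measurable TT := by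
  unfold TT
  exact (Measurable.tsum (fun n => EE_meas (bb n))).const_mul 2

lemma theta0_eq (t : ℝ) : theta0 t = (TT t).toReal := by
  unfold theta0 TT
  rw [ENNReal.toReal_mul, ENNReal.tsum_toReal_eq (f := fun n => EE (bb n) t)
    (fun n => ENNReal.ofReal_ne_top)]
  simp [EE, bb, ENNReal.toReal_ofReal, Real.exp_nonneg]

lemma theta0_nonneg (t : ℝ) : 0 ≤ theta0 t := by
  rw [theta0_eq]; exact ENNReal.toReal_nonneg

lemma theta0_meas : Measurable theta0 := by
  have : theta0 = fun t => (TT t).toReal := funext theta0_eq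
  rw [this]
  exact TT_meas.ennreal_toReal

lemma summ (t : ℝ) (ht : 0 < t) : Summable (fun n : ℕ => Real.exp (-(bb n * t ^ 2))) := by
  have h : Summable (fun n : ℕ => Real.exp (n * (-(π * t ^ 2)))) := by
    rw [Real.summable_exp_nat_mul_iff]
    have : 0 < π * t ^ 2 := by positivity
    linarith
  refine Summable.of_nonneg_of_le (fun n => Real.exp_nonneg _) (fun n => ?_) h
  apply Real.exp_le_exp.mpr
  unfold bb
  have h1 : 0 < π * t ^ 2 := by positivity
  have h2 : (n : ℝ) ≤ ((n : ℝ) + 1) ^ 2 := by nlinarith [(Nat.cast_nonneg n : (0 : ℝ) ≤ n)]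
  nlinarith [mul_le_mul_of_nonneg_right h2 h1.le]

lemma TT_ne_top (t : ℝ) (ht : 0 < t) : TT t ≠ ⊤ := by
  unfold TT EE
  rw [← ENNReal.ofReal_tsum_of_nonneg (fun n => Real.exp_nonneg _) (summ t ht)]
  exact ENNReal.mul_ne_top (by simp) ENNReal.ofReal_ne_top

lemma TT_ne_zero (t : ℝ) : TT t ≠ 0 := by
  unfold TT EE
  simp only [ne_eq, mul_eq_zero, ENNReal.tsum_eq_zero, not_or, not_forall]
  refine ⟨by simp, 0, ?_⟩
  simp [Real.exp_pos]

lemma ofReal_theta0 (t : ℝ) (ht : 0 < t) : ENNReal.ofReal (theta0 t) = TT t := by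
  rw [theta0_eq, ENNReal.ofReal_toReal (TT_ne_top t ht)]

lemma moment (k : ℕ) (b : ℝ) (hb : 0 < b) :
    ∫⁻ t in Set.Ioi (0 : ℝ), ENNReal.ofReal (t ^ (2 * k + 1)) * EE b t =
      ENNReal.ofReal (k.factorial / (2 * b ^ (k + 1))) := by
  have hq : (-1 : ℝ) < ((2 * k + 1 : ℕ) : ℝ) := by
    have : (0 : ℝ) ≤ ((2 * k + 1 : ℕ) : ℝ) := Nat.cast_nonneg _
    linarith
  have h1 := integrableOn_rpow_mul_exp_neg_mul_sq hb hq
  have h2 := integral_rpow_mul_exp_neg_mul_rpow (p := 2) (by norm_num) hq hb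
  have h3 : ∫ x in Set.Ioi (0 : ℝ), x ^ ((2 * k + 1 : ℕ) : ℝ) * Real.exp (-b * x ^ 2) =
      k.factorial / (2 * b ^ (k + 1)) := by
    have e : (((2 * k + 1 : ℕ) : ℝ) + 1) / 2 = (k : ℝ) + 1 := by push_cast; ring
    rw [neg_div, e, Real.Gamma_nat_eq_factorial, Real.rpow_neg hb.le] at h2
    have e2 : b ^ ((k : ℝ) + 1) = b ^ (k + 1) := by
      rw [← Real.rpow_natCast]; push_cast; rfl
    rw [e2] at h2
    simp only [Real.rpow_ofNat] at h2
    rw [h2]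
    field_simp
  rw [← h3, ofReal_integral_eq_lintegral_ofReal h1]
  · refine setLIntegral_congr_fun measurableSet_Ioi (fun t ht => ?_)
    have ht' : (0 : ℝ) < t := ht
    simp only [EE]
    rw [← ENNReal.ofReal_mul (by positivity), Real.rpow_natCast, neg_mul]
  · refine (ae_restrict_iff' measurableSet_Ioi).mpr (Filter.Eventually.of_forall fun t ht => ?_)
    have ht' : (0 : ℝ) < t := ht
    simp only [Pi.zero_apply]
    positivity

lemma tail (a b : ℝ) (ha : 0 < a) (hb : 0 < b) :
    ∫⁻ t in Set.Ici a, EE b t * ENNReal.ofReal t = ENNReal.ofReal (1 / (2 * b)) * EE b a := by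
  rw [setLIntegral_congr (Ioi_ae_eq_Ici (a := a) (μ := volume)).symm]
  have hd : ∀ x ∈ Set.Ici a, HasDerivAt (fun t : ℝ => -(1 / (2 * b)) * Real.exp (-(b * t ^ 2)))
      (x * Real.exp (-(b * x ^ 2))) x := by
    intro x _
    have := ((((hasDerivAt_pow 2 x).const_mul b).neg).exp).const_mul (-(1 / (2 * b)))
    refine this.congr_deriv ?_
    simp only [Nat.cast_ofNat, Nat.add_one_sub_one, pow_one]
    field_simp
    exact mul_comm _ _
  have hpos : ∀ x ∈ Set.Ioi a, 0 ≤ x * Real.exp (-(b * x ^ 2)) := by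
    intro x hx
    have : 0 < x := ha.trans hx
    positivity
  have hlim : Filter.Tendsto (fun t : ℝ => -(1 / (2 * b)) * Real.exp (-(b * t ^ 2)))
      Filter.atTop (nhds 0) := by
    have : Filter.Tendsto (fun t : ℝ => Real.exp (-(b * t ^ 2))) Filter.atTop (nhds 0) :=
      Real.tendsto_exp_neg_atTop_nhds_zero.comp
        ((Filter.tendsto_pow_atTop (by norm_num : (2 : ℕ) ≠ 0)).const_mul_atTop hb)
    simpa using this.const_mul (-(1 / (2 * b)))
  have h1 := integrableOn_Ioi_deriv_of_nonneg' hd hpos hlim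
  have h2 := integral_Ioi_of_hasDerivAt_of_nonneg' hd hpos hlim
  have h3 : ENNReal.ofReal (1 / (2 * b)) * EE b a =
      ENNReal.ofReal (∫ x in Set.Ioi a, x * Real.exp (-(b * x ^ 2))) := by
    rw [h2, EE, ← ENNReal.ofReal_mul (by positivity)]
    congr 1; ring
  rw [h3, ofReal_integral_eq_lintegral_ofReal h1]
  · refine setLIntegral_congr_fun measurableSet_Ioi (fun t ht => ?_)
    have ht' : (0 : ℝ) < t := ha.trans ht
    simp only [EE]
    rw [← ENNReal.ofReal_mul (by positivity), mul_comm]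
  · exact (ae_restrict_iff' measurableSet_Ioi).mpr (Filter.Eventually.of_forall hpos)

/-- Tonelli on the triangle. -/
lemma swap (F G : ℝ → ENNReal) (hF : Measurable F) (hG : Measurable G) :
    (Measurable fun y : ℝ => ∫⁻ x in Set.Ioc (0 : ℝ) y, F x) ∧
    ∫⁻ y in Set.Ioi (0 : ℝ), (∫⁻ x in Set.Ioc (0 : ℝ) y, F x) * G y =
      ∫⁻ x in Set.Ioi (0 : ℝ), F x * ∫⁻ y in Set.Ici x, G y := by
  have hS : MeasurableSet {p : ℝ × ℝ | 0 < p.2 ∧ p.2 ≤ p.1} :=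
    (measurableSet_lt measurable_const measurable_snd).inter
      (measurableSet_le measurable_snd measurable_fst)
  have hm : Measurable fun y : ℝ => ∫⁻ x in Set.Ioc (0 : ℝ) y, F x := by
    have h := Measurable.lintegral_prod_right' (ν := (volume : Measure ℝ))
      ((hF.comp measurable_snd).indicator hS)
    convert h using 2 with y
    rw [← lintegral_indicator measurableSet_Ioc]
    rfl
  refine ⟨hm, ?_⟩
  have hH : Measurable (Set.indicator {p : ℝ × ℝ | 0 < p.2 ∧ p.2 ≤ p.1}
      (fun p => F p.2 * G p.1)) :=
    ((hF.comp measurable_snd).mul (hG.comp measurable_fst)).indicator hS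
  calc _ = ∫⁻ y, ∫⁻ x, Set.indicator {p : ℝ × ℝ | 0 < p.2 ∧ p.2 ≤ p.1}
              (fun p => F p.2 * G p.1) (y, x) := by
        rw [← lintegral_indicator measurableSet_Ioi]
        refine lintegral_congr fun y => ?_
        by_cases hy : 0 < y
        · rw [Set.indicator_of_mem (show y ∈ Set.Ioi (0 : ℝ) from hy),
            ← lintegral_mul_const _ hF, ← lintegral_indicator measurableSet_Ioc]
          rfl
        · rw [Set.indicator_of_notMem (show y ∉ Set.Ioi (0 : ℝ) from hy)]
          symm
          refine (lintegral_congr fun x => ?_).trans lintegral_zero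
          refine Set.indicator_of_notMem ?_ _
          rintro ⟨h1, h2⟩
          exact hy (h1.trans_le h2)
    _ = ∫⁻ x, ∫⁻ y, Set.indicator {p : ℝ × ℝ | 0 < p.2 ∧ p.2 ≤ p.1}
              (fun p => F p.2 * G p.1) (y, x) := lintegral_lintegral_swap hH.aemeasurable
    _ = _ := by
        rw [← lintegral_indicator measurableSet_Ioi]
        refine lintegral_congr fun x => ?_
        by_cases hx : 0 < x
        · rw [Set.indicator_of_mem (show x ∈ Set.Ioi (0 : ℝ) from hx),
            ← lintegral_const_mul _ hG, ← lintegral_indicator measurableSet_Ici]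
          refine lintegral_congr fun y => ?_
          by_cases hxy : x ≤ y
          · rw [Set.indicator_of_mem (show (y, x) ∈ {p : ℝ × ℝ | 0 < p.2 ∧ p.2 ≤ p.1} from
              ⟨hx, hxy⟩), Set.indicator_of_mem (show y ∈ Set.Ici x from hxy)]
          · rw [Set.indicator_of_notMem (fun h => hxy h.2),
              Set.indicator_of_notMem (show y ∉ Set.Ici x from hxy)]
        · rw [Set.indicator_of_notMem (show x ∉ Set.Ioi (0 : ℝ) from hx)]
          refine (lintegral_congr fun y => ?_).trans lintegral_zero
          exact Set.indicator_of_notMem (fun h => hx h.1) _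

lemma tailTT (a : ℝ) (ha : 0 < a) :
    ∫⁻ t in Set.Ici a, TT t * ENNReal.ofReal t =
      ∑' n, ENNReal.ofReal (1 / bb n) * EE (bb n) a := by
  have : ∀ t, TT t * ENNReal.ofReal t = ∑' n, 2 * (EE (bb n) t * ENNReal.ofReal t) := by
    intro t
    rw [TT, mul_assoc, ← ENNReal.tsum_mul_right, ENNReal.tsum_mul_left]
  simp_rw [this]
  have hm : ∀ n, Measurable fun t => EE (bb n) t * ENNReal.ofReal t := fun n =>
    (EE_meas _).mul ENNReal.measurable_ofReal
  rw [lintegral_tsum (fun n => ((hm n).const_mul 2).aemeasurable)]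
  refine tsum_congr fun n => ?_
  rw [lintegral_const_mul _ (hm n), tail a _ ha (bb_pos n), ← mul_assoc]
  congr 1
  rw [show (2 : ENNReal) = ENNReal.ofReal 2 by simp, ← ENNReal.ofReal_mul (by norm_num)]
  congr 1
  have := bb_pos n
  field_simp

lemma EE_mul (b c t : ℝ) : EE b t * EE c t = EE (b + c) t := by
  rw [EE, EE, EE, ← ENNReal.ofReal_mul (Real.exp_nonneg _), ← Real.exp_add]
  congr 2; ring

/-- Value of the first integral, in extended nonnegative reals. -/
lemma first (k : ℕ) :
    ∫⁻ x in Set.Ioi (0 : ℝ), ((1 + TT x) * ENNReal.ofReal (x ^ (2 * k + 1))) *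
        ∫⁻ y in Set.Ici x, TT y * ENNReal.ofReal y =
      (∑' n, ENNReal.ofReal (1 / bb n) * ENNReal.ofReal (k.factorial / (2 * bb n ^ (k + 1)))) +
      ∑' p : ℕ × ℕ, 2 * (ENNReal.ofReal (1 / bb p.2) *
        ENNReal.ofReal (k.factorial / (2 * (bb p.1 + bb p.2) ^ (k + 1)))) := by
  have hm : ∀ b, Measurable fun t : ℝ => ENNReal.ofReal (t ^ (2 * k + 1)) * EE b t := fun b =>
    (by fun_prop : Measurable fun t : ℝ => ENNReal.ofReal (t ^ (2 * k + 1))).mul (EE_meas b)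
  have hpt : ∀ x ∈ Set.Ioi (0 : ℝ), ((1 + TT x) * ENNReal.ofReal (x ^ (2 * k + 1))) *
        ∫⁻ y in Set.Ici x, TT y * ENNReal.ofReal y =
      (∑' n, ENNReal.ofReal (1 / bb n) * (ENNReal.ofReal (x ^ (2 * k + 1)) * EE (bb n) x)) +
      ∑' p : ℕ × ℕ, (2 * ENNReal.ofReal (1 / bb p.2)) *
        (ENNReal.ofReal (x ^ (2 * k + 1)) * EE (bb p.1 + bb p.2) x) := by
    intro x hx
    rw [tailTT x hx, add_mul, add_mul, one_mul]
    congr 1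
    · rw [← ENNReal.tsum_mul_left]
      exact tsum_congr fun n => by ring
    · rw [ENNReal.tsum_prod', TT, mul_assoc, mul_assoc, ← ENNReal.tsum_mul_right,
        ← ENNReal.tsum_mul_left]
      refine tsum_congr fun m => ?_
      rw [← ENNReal.tsum_mul_left, ← ENNReal.tsum_mul_left, ← ENNReal.tsum_mul_left]
      refine tsum_congr fun n => ?_
      simp only [← EE_mul]
      ring
  rw [setLIntegral_congr_fun measurableSet_Ioi hpt, lintegral_add_left,
    lintegral_tsum (fun n => ((hm _).const_mul _).aemeasurable),
    lintegral_tsum (fun n => ((hm _).const_mul _).aemeasurable)]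
  · congr 1
    · refine tsum_congr fun n => ?_
      rw [lintegral_const_mul _ (hm _), moment k _ (bb_pos n)]
    · refine tsum_congr fun p => ?_
      rw [lintegral_const_mul _ (hm _), moment k _ (add_pos (bb_pos _) (bb_pos _)), mul_assoc]
  · exact Measurable.tsum fun n => (hm _).const_mul _

/-- Value of the second integral. -/
lemma second (k : ℕ) :
    ∫⁻ x in Set.Ioi (0 : ℝ), TT x * ENNReal.ofReal (x ^ (2 * (k + 1) + 1)) =
      2 * ∑' n, ENNReal.ofReal ((k + 1).factorial / (2 * bb n ^ (k + 2))) := by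
  have hm : ∀ b, Measurable fun t : ℝ => ENNReal.ofReal (t ^ (2 * (k + 1) + 1)) * EE b t :=
    fun b => (by fun_prop :
      Measurable fun t : ℝ => ENNReal.ofReal (t ^ (2 * (k + 1) + 1))).mul (EE_meas b)
  have : ∀ x, TT x * ENNReal.ofReal (x ^ (2 * (k + 1) + 1)) =
      2 * ∑' n, ENNReal.ofReal (x ^ (2 * (k + 1) + 1)) * EE (bb n) x := by
    intro x
    rw [TT, ENNReal.tsum_mul_left]; ring
  simp_rw [this]
  rw [lintegral_const_mul _ (Measurable.tsum fun n => hm _),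
    lintegral_tsum (fun n => (hm _).aemeasurable)]
  congr 1
  exact tsum_congr fun n => moment (k + 1) _ (bb_pos n)

lemma summ1 (j : ℕ) : Summable fun n : ℕ => 1 / ((n : ℝ) + 1) ^ (j + 2) := by
  have := (summable_nat_add_iff 1).mpr (Real.summable_one_div_nat_pow.mpr (by omega : 1 < j + 2))
  simpa using this

lemma summ2 (k : ℕ) : Summable fun p : ℕ × ℕ =>
    1 / ((((p.1 + 1 : ℝ) ^ 2 + (p.2 + 1 : ℝ) ^ 2) ^ (k + 1)) * ((p.2 + 1 : ℝ) ^ 2)) := by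
  have h := (summ1 0).mul_of_nonneg (summ1 0) (fun n => by positivity) (fun n => by positivity)
  refine Summable.of_nonneg_of_le (fun p => by positivity) (fun p => ?_) h
  rw [div_mul_div_comm, one_mul]
  refine one_div_le_one_div_of_le (by positivity) ?_
  simp only [zero_add]
  gcongr
  have h1 : (1 : ℝ) ≤ (p.1 + 1 : ℝ) ^ 2 + (p.2 + 1 : ℝ) ^ 2 := by
    nlinarith [(Nat.cast_nonneg p.1 : (0 : ℝ) ≤ p.1), (Nat.cast_nonneg p.2 : (0 : ℝ) ≤ p.2)]
  calc (p.1 + 1 : ℝ) ^ 2 ≤ (p.1 + 1 : ℝ) ^ 2 + (p.2 + 1 : ℝ) ^ 2 := by nlinarith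
    _ ≤ _ := le_self_pow₀ h1 (by omega)

lemma first_val (k : ℕ) :
    (∑' n, ENNReal.ofReal (1 / bb n) * ENNReal.ofReal (k.factorial / (2 * bb n ^ (k + 1)))) +
      ∑' p : ℕ × ℕ, 2 * (ENNReal.ofReal (1 / bb p.2) *
        ENNReal.ofReal (k.factorial / (2 * (bb p.1 + bb p.2) ^ (k + 1)))) =
    ENNReal.ofReal ((k.factorial / π ^ (k + 2)) *
      ((1 / 2) * ∑' m : ℕ, 1 / ((m + 1 : ℝ) ^ (2 * (k + 1) + 2)) +
       ∑' p : ℕ × ℕ,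
        1 / ((((p.1 + 1 : ℝ) ^ 2 + (p.2 + 1 : ℝ) ^ 2) ^ (k + 1)) * ((p.2 + 1 : ℝ) ^ 2)))) := by
  rw [← tsum_mul_left, mul_add, ← tsum_mul_left, ← tsum_mul_left, ENNReal.ofReal_add
    (tsum_nonneg fun _ => by positivity) (tsum_nonneg fun _ => by positivity),
    ENNReal.ofReal_tsum_of_nonneg (fun _ => by positivity)
      (((summ1 (2 * (k + 1))).mul_left _).mul_left _),
    ENNReal.ofReal_tsum_of_nonneg (fun _ => by positivity) ((summ2 k).mul_left _)]
  congr 1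
  · refine tsum_congr fun n => ?_
    have := bb_pos n
    rw [← ENNReal.ofReal_mul (by positivity)]
    congr 1
    unfold bb
    rw [mul_pow, ← pow_mul]
    field_simp
    ring
  · refine tsum_congr fun p => ?_
    have := bb_pos p.1
    have := bb_pos p.2
    rw [show (2 : ENNReal) = ENNReal.ofReal 2 by simp, ← ENNReal.ofReal_mul (by positivity),
      ← ENNReal.ofReal_mul (by positivity)]
    congr 1
    unfold bb
    rw [← mul_add, mul_pow]
    field_simp
    ring

lemma second_val (k : ℕ) :
    2 * ∑' n, ENNReal.ofReal ((k + 1).factorial / (2 * bb n ^ (k + 2))) =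
    ENNReal.ofReal (((k + 1).factorial / π ^ (k + 2)) *
      ∑' m : ℕ, 1 / ((m + 1 : ℝ) ^ (2 * (k + 1) + 2))) := by
  rw [← tsum_mul_left, ← ENNReal.tsum_mul_left,
    ENNReal.ofReal_tsum_of_nonneg (fun _ => by positivity)
      ((summ1 (2 * (k + 1))).mul_left _)]
  refine tsum_congr fun n => ?_
  have := bb_pos n
  rw [show (2 : ENNReal) = ENNReal.ofReal 2 by simp, ← ENNReal.ofReal_mul (by positivity)]
  congr 1
  unfold bb
  rw [mul_pow, ← pow_mul]
  field_simp
  ring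

/-- First real integral. -/
lemma A_eq (k : ℕ) :
    ∫ y in Set.Ioi (0 : ℝ), (∫ x in Set.Ioc (0 : ℝ) y, thetaFull x * x ^ (2 * k + 1)) *
      (theta0 y * y) = (k.factorial / π ^ (k + 2)) *
      ((1 / 2) * ∑' m : ℕ, 1 / ((m + 1 : ℝ) ^ (2 * (k + 1) + 2)) +
       ∑' p : ℕ × ℕ,
        1 / ((((p.1 + 1 : ℝ) ^ 2 + (p.2 + 1 : ℝ) ^ 2) ^ (k + 1)) * ((p.2 + 1 : ℝ) ^ 2))) := by
  have hFm : Measurable fun x : ℝ => (1 + TT x) * ENNReal.ofReal (x ^ (2 * k + 1)) :=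
    (measurable_const.add TT_meas).mul (by fun_prop)
  have hGm : Measurable fun y : ℝ => TT y * ENNReal.ofReal y :=
    TT_meas.mul ENNReal.measurable_ofReal
  obtain ⟨hm, hsw⟩ := swap _ _ hFm hGm
  rw [first k, first_val k] at hsw
  have hfin := ae_lt_top (hm.mul hGm) (μ := volume.restrict (Set.Ioi (0 : ℝ)))
    (by simp only [Pi.mul_apply]; rw [hsw]; exact ENNReal.ofReal_ne_top)
  have h := integral_toReal (hm.mul hGm).aemeasurable hfin
  simp only [Pi.mul_apply] at h
  rw [hsw, ENNReal.toReal_ofReal (by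
    have h1 : 0 ≤ ∑' m : ℕ, 1 / ((m + 1 : ℝ) ^ (2 * (k + 1) + 2)) :=
      tsum_nonneg fun _ => by positivity
    have h2 : 0 ≤ ∑' p : ℕ × ℕ,
        1 / ((((p.1 + 1 : ℝ) ^ 2 + (p.2 + 1 : ℝ) ^ 2) ^ (k + 1)) * ((p.2 + 1 : ℝ) ^ 2)) :=
      tsum_nonneg fun _ => by positivity
    positivity)] at h
  rw [← h]
  refine setIntegral_congr_fun measurableSet_Ioi fun y hy => ?_
  have hy' : (0 : ℝ) < y := hy
  simp only [ENNReal.toReal_mul, ENNReal.toReal_ofReal hy'.le, ← theta0_eq]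
  congr 1
  rw [integral_eq_lintegral_of_nonneg_ae]
  · congr 1
    refine setLIntegral_congr_fun measurableSet_Ioc fun x hx => ?_
    have hx' : (0 : ℝ) < x := hx.1
    have := theta0_nonneg x
    simp only [thetaFull]
    rw [ENNReal.ofReal_mul (by positivity), ENNReal.ofReal_add zero_le_one this,
      ofReal_theta0 x hx', ENNReal.ofReal_one]
  · refine (ae_restrict_iff' measurableSet_Ioc).mpr (Filter.Eventually.of_forall fun x hx => ?_)
    have hx' : (0 : ℝ) < x := hx.1
    have := theta0_nonneg x
    simp only [thetaFull, Pi.zero_apply]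
    positivity
  · have : Measurable fun x : ℝ => thetaFull x * x ^ (2 * k + 1) :=
      (measurable_const.add theta0_meas).mul (by fun_prop)
    exact this.aestronglyMeasurable

/-- Second real integral. -/
lemma B_eq (k : ℕ) :
    ∫ y in Set.Ioi (0 : ℝ), (∫ x in Set.Ioc (0 : ℝ) y, x) * (theta0 y * y ^ (2 * k + 1)) =
      (1 / 2) * (((k + 1).factorial / π ^ (k + 2)) *
      ∑' m : ℕ, 1 / ((m + 1 : ℝ) ^ (2 * (k + 1) + 2))) := by
  have hB : ∫ y in Set.Ioi (0 : ℝ), theta0 y * y ^ (2 * (k + 1) + 1) =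
      ((k + 1).factorial / π ^ (k + 2)) *
      ∑' m : ℕ, 1 / ((m + 1 : ℝ) ^ (2 * (k + 1) + 2)) := by
    rw [integral_eq_lintegral_of_nonneg_ae]
    · have h := second k
      rw [second_val] at h
      have h1 : 0 ≤ ∑' m : ℕ, 1 / ((m + 1 : ℝ) ^ (2 * (k + 1) + 2)) :=
        tsum_nonneg fun _ => by positivity
      rw [← ENNReal.toReal_ofReal (mul_nonneg (by positivity) h1), ← h]
      congr 1
      refine setLIntegral_congr_fun measurableSet_Ioi fun x hx => ?_
      rw [ENNReal.ofReal_mul (theta0_nonneg x), ofReal_theta0 x hx]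
    · refine (ae_restrict_iff' measurableSet_Ioi).mpr (Filter.Eventually.of_forall fun x hx => ?_)
      have hx' : (0 : ℝ) < x := hx
      have := theta0_nonneg x
      simp only [Pi.zero_apply]
      positivity
    · have : Measurable fun x : ℝ => theta0 x * x ^ (2 * (k + 1) + 1) :=
        theta0_meas.mul (by fun_prop)
      exact this.aestronglyMeasurable
  rw [← hB, ← integral_const_mul]
  refine setIntegral_congr_fun measurableSet_Ioi fun y hy => ?_
  have hy' : (0 : ℝ) < y := hy
  rw [← intervalIntegral.integral_of_le hy'.le, integral_id]
  ring

lemma doubleXi_eq (k : ℕ) : doubleXi (2 * ((k + 1 : ℕ) : ℂ)) 2 =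
    (((∫ y in Set.Ioi (0 : ℝ), (∫ x in Set.Ioc (0 : ℝ) y, thetaFull x * x ^ (2 * k + 1)) *
      (theta0 y * y)) -
    ∫ y in Set.Ioi (0 : ℝ), (∫ x in Set.Ioc (0 : ℝ) y, x) *
      (theta0 y * y ^ (2 * k + 1)) : ℝ) : ℂ) := by
  have e1 : (2 * ((k + 1 : ℕ) : ℂ)) - 1 = ((2 * k + 1 : ℕ) : ℂ) := by push_cast; ring
  have e2 : (2 : ℂ) - 1 = 1 := by norm_num
  unfold doubleXi
  rw [e1, e2, Complex.ofReal_sub, ← integral_complex_ofReal, ← integral_complex_ofReal]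
  simp only [Complex.cpow_natCast, Complex.cpow_one, Complex.ofReal_mul, Complex.ofReal_pow,
    ← integral_complex_ofReal]

end DXi

/-- For every `ℓ ≥ 1`:
`∑_{m,n≥1} (m²+n²)^{-ℓ} n^{-2} + ((1-ℓ)/2) ∑_{m≥1} m^{-(2ℓ+2)} = (π^{ℓ+1}/(ℓ-1)!) ξ(2ℓ,2)`. -/
theorem double_xi_two_ell_two (ℓ : ℕ) (hℓ : 1 ≤ ℓ) :
    ((∑' p : ℕ × ℕ,
        1 / ((((p.1 + 1 : ℝ) ^ 2 + (p.2 + 1 : ℝ) ^ 2) ^ ℓ) * ((p.2 + 1 : ℝ) ^ 2)) : ℝ) : ℂ) +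
      (((1 - (ℓ : ℝ)) / 2) * ∑' m : ℕ, 1 / ((m + 1 : ℝ) ^ (2 * ℓ + 2)) : ℝ) =
      ((π : ℂ) ^ (ℓ + 1) / (Nat.factorial (ℓ - 1) : ℂ)) * doubleXi (2 * ℓ) 2 := by
  obtain ⟨k, rfl⟩ : ∃ k, ℓ = k + 1 := ⟨ℓ - 1, by omega⟩
  rw [DXi.doubleXi_eq, DXi.A_eq, DXi.B_eq, Nat.add_sub_cancel]
  set S : ℝ := ∑' p : ℕ × ℕ,
        1 / ((((p.1 + 1 : ℝ) ^ 2 + (p.2 + 1 : ℝ) ^ 2) ^ (k + 1)) * ((p.2 + 1 : ℝ) ^ 2))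
  set Z : ℝ := ∑' m : ℕ, 1 / ((m + 1 : ℝ) ^ (2 * (k + 1) + 2))
  have hf : (k.factorial : ℝ) ≠ 0 := by positivity
  have key : S + ((1 - ((k + 1 : ℕ) : ℝ)) / 2) * Z = (π ^ (k + 1 + 1) / (k.factorial : ℝ)) *
      (k.factorial / π ^ (k + 2) * (1 / 2 * Z + S) -
        1 / 2 * ((k + 1).factorial / π ^ (k + 2) * Z)) := by
    rw [Nat.factorial_succ]
    push_cast
    have hp : π ≠ 0 := Real.pi_ne_zero
    field_simp
    ring
  rw [← Complex.ofReal_add, key]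
  push_cast
  rfl
end
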